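/- Fusion (combinatorial) formula for the L-matrix: let k ≥ 1 and a, b, c, d ∈ ℤ with a − b = k − 2n and c − d = k − 2m for some 0 ≤ n, m ≤ k, with min(c,d) > k; assume r is irrational and u is such that every bracket appearing in a denominator is nonzero. Let a_0 = a, …, a_k = b be the canonical path from a to b. Then L^{(k)}(a,b;c,d|u) = Σ over all paths c_0 = c, c_1, …, c_k = d with |c_j − c_{j−1}| = 1 of ∏_{j=1}^{k} L^{(1)}(a_{j−1}, a_j; c_{j−1}, c_j | u+k−j), where L^{(1)}(a',b';c',d'|u') := Σ_{ε ∈ {±1}} ψ*_ε(u')^{d'}_{c'} ψ_ε(u')^{a'}_{b'} and L^{(k)}(a,b;c,d|u) := Σ_{μ ∈ {−k,−k+2,…,k}} ψ*^{(k)}_μ(u)^d_c ψ^{(k)}_μ(u)^a_b. -/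

import Mathlib

noncomputable section

open Complex Finset

namespace Ell

/-- `x^s = exp(-iπ s /(r τ))`. -/
def xp (τ : ℂ) (r : ℝ) (s : ℂ) : ℂ :=
  Complex.exp (-Complex.I * (Real.pi : ℂ) * s / ((r : ℂ) * τ))

/-- `Θ_p(z) = ∏_{j ≥ 0} (1 - z p^j)(1 - p^{j+1}/z)(1 - p^{j+1})`. -/
def Theta (p z : ℂ) : ℂ :=
  ∏' j : ℕ, ((1 - z * p ^ j) * (1 - p ^ (j + 1) / z) * (1 - p ^ (j + 1)))

/-- The bracket `[u] = x^{u²/r - u} Θ_p(x^{2u})` with `p = x^{2r}`. -/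
def br (τ : ℂ) (r : ℝ) (u : ℂ) : ℂ :=
  xp τ r (u ^ 2 / (r : ℂ) - u) * Theta (xp τ r (2 * (r : ℂ))) (xp τ r (2 * u))

/-- Elliptic shifted factorial `[u]_n = ∏_{j=0}^{n-1} [u+j]`. -/
def brF (τ : ℂ) (r : ℝ) (u : ℂ) (n : ℕ) : ℂ :=
  ∏ j ∈ Finset.range n, br τ r (u + (j : ℂ))

/-- Elliptic binomial coefficient `C_n^k(α,β,γ)`. -/
def Cnk (τ : ℂ) (r : ℝ) (k n : ℕ) (α β γ : ℂ) : ℂ :=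
  brF τ r 1 k / (brF τ r 1 n * brF τ r 1 (k - n)) *
    (brF τ r (α - γ) n * brF τ r (α + γ + (k : ℂ) - (n : ℂ)) n *
      brF τ r (α - β) (k - n) * brF τ r (α + β + (n : ℂ)) (k - n)) /
    (brF τ r (β - γ + (n : ℂ) - (k : ℂ)) n * brF τ r (γ - β - (n : ℂ)) (k - n) *
      brF τ r (β + γ) k)

/-- The elliptic 6j-symbol `R_n^m(α,β,γ,δ;k)`. -/
def Rnm (τ : ℂ) (r : ℝ) (k n m : ℕ) (α β γ δ : ℂ) : ℂ :=
  ∑ j ∈ Finset.range (min n m + 1),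
    Cnk τ r n j α γ (β + (k : ℂ) - (n : ℂ)) * Cnk τ r (k - j) (m - j) β (γ + (j : ℂ)) δ

/-- Terminating very-well-poised elliptic hypergeometric sum with explicit
truncation `N`:  `Σ_{j=0}^N ([u₀+2j]/[u₀]) ([u₀]_j/[1]_j) ∏ᵢ [uᵢ]_j/[u₀+1-uᵢ]_j`. -/
def Vsum (τ : ℂ) (r : ℝ) (u₀ : ℂ) (us : List ℂ) (N : ℕ) : ℂ :=
  ∑ j ∈ Finset.range (N + 1),
    br τ r (u₀ + 2 * (j : ℂ)) / br τ r u₀ * (brF τ r u₀ j / brF τ r 1 j) *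
      (us.map fun ui => brF τ r ui j / brF τ r (u₀ + 1 - ui) j).prod

/-- "Every bracket appearing in a denominator of `C_n^k(·,β,γ)` is nonzero". -/
def CdenomNZ (τ : ℂ) (r : ℝ) (k n : ℕ) (β γ : ℂ) : Prop :=
  brF τ r 1 n ≠ 0 ∧ brF τ r 1 (k - n) ≠ 0 ∧
    brF τ r (β - γ + (n : ℂ) - (k : ℂ)) n ≠ 0 ∧
    brF τ r (γ - β - (n : ℂ)) (k - n) ≠ 0 ∧ brF τ r (β + γ) k ≠ 0

/-- "Every bracket appearing in a denominator of `R_n^m(α,β,γ,δ;k)` is nonzero". -/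
def RdenomNZ (τ : ℂ) (r : ℝ) (k n m : ℕ) (β γ δ : ℂ) : Prop :=
  ∀ j ≤ min n m,
    CdenomNZ τ r n j γ (β + (k : ℂ) - (n : ℂ)) ∧
      CdenomNZ τ r (k - j) (m - j) (γ + (j : ℂ)) δ

/-- Jacobi theta `ϑ₁(v|σ)`. -/
def th1 (v σ : ℂ) : ℂ :=
  2 * Complex.exp (2 * (Real.pi : ℂ) * Complex.I * σ / 8) *
    (∏' n : ℕ, (1 - Complex.exp (2 * (Real.pi : ℂ) * Complex.I * σ) ^ (n + 1))) *
    Complex.sin ((Real.pi : ℂ) * v) *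
    ∏' n : ℕ,
      (1 - 2 * Complex.exp (2 * (Real.pi : ℂ) * Complex.I * σ) ^ (n + 1) *
            Complex.cos (2 * (Real.pi : ℂ) * v) +
        Complex.exp (2 * (Real.pi : ℂ) * Complex.I * σ) ^ (2 * (n + 1)))

/-- Jacobi theta `ϑ₀(v|σ)`. -/
def th0 (v σ : ℂ) : ℂ :=
  -Complex.I * Complex.exp ((Real.pi : ℂ) * Complex.I * (v + σ / 4)) * th1 (v + σ / 2) σ

/-- Jacobi theta `ϑ₂(v|σ)`. -/
def th2 (v σ : ℂ) : ℂ := th1 (v + 1 / 2) σ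

/-- Jacobi theta `ϑ₃(v|σ)`. -/
def th3 (v σ : ℂ) : ℂ :=
  Complex.exp ((Real.pi : ℂ) * Complex.I * (v + σ / 4)) * th1 (v + (σ + 1) / 2) σ

/-- Intertwining vector component `ψ_ε(u)^a_b`, `ε ∈ {1, -1}`. -/
def psi (τ : ℂ) (r : ℝ) (u : ℂ) (ε : ℤ) (a b : ℤ) : ℂ :=
  if ε = 1 then th0 ((((a : ℂ) - (b : ℂ)) * u + (a : ℂ)) / (2 * (r : ℂ))) (τ / 2)
  else th3 ((((a : ℂ) - (b : ℂ)) * u + (a : ℂ)) / (2 * (r : ℂ))) (τ / 2)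

/-- The constant `C = x^{-r/4} e^{-iπ/4} τ^{1/2}`. -/
def Cc (τ : ℂ) (r : ℝ) : ℂ :=
  xp τ r (-(r : ℂ) / 4) * Complex.exp (-(Real.pi : ℂ) * Complex.I / 4) * τ ^ (1 / 2 : ℂ)

/-- Dual intertwining vector component `ψ*_ε(u)^a_b = -ε(a-b) C² ψ_{-ε}(u-1)^a_b/(2[b][u])`. -/
def psiStar (τ : ℂ) (r : ℝ) (u : ℂ) (ε : ℤ) (a b : ℤ) : ℂ :=
  -(ε : ℂ) * ((a : ℂ) - (b : ℂ)) * Cc τ r ^ 2 * psi τ r (u - 1) (-ε) a b /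
    (2 * br τ r (b : ℂ) * br τ r u)

/-- Sign attached to a boolean. -/
def sg (b : Bool) : ℤ := if b then 1 else -1

/-- Canonical path from `a`: up for `j ≤ n`, down afterwards. -/
def cpathZ (a n : ℤ) (j : ℕ) : ℤ := if (j : ℤ) ≤ n then a + j else a + 2 * n - j

/-- Admissibility: `a - b ∈ {-k, -k+2, …, k}`. -/
def adm (k : ℕ) (a b : ℤ) : Prop := (a - b).natAbs ≤ k ∧ (a - b - (k : ℤ)) % 2 = 0

instance (k : ℕ) (a b : ℤ) : Decidable (adm k a b) := by unfold adm; infer_instance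

/-- Fused intertwining vector component `ψ^{(k)}_μ(u)^a_b` (zero if `a,b` not admissible). -/
def psiF (τ : ℂ) (r : ℝ) (k : ℕ) (μ : ℤ) (u : ℂ) (a b : ℤ) : ℂ :=
  if adm k a b then
    ∑ ε ∈ Finset.univ.filter fun ε : Fin k → Bool => (∑ j, sg (ε j)) = μ,
      ∏ j : Fin k,
        psi τ r (u + (k : ℂ) - (((j : ℕ) + 1 : ℕ) : ℂ)) (sg (ε j))
          (cpathZ a (((k : ℤ) - (a - b)) / 2) (j : ℕ))
          (cpathZ a (((k : ℤ) - (a - b)) / 2) ((j : ℕ) + 1))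
  else 0

/-- Partial-sum path attached to a sign sequence `δ`, starting at `a`. -/
def spath (k : ℕ) (a : ℤ) (δ : Fin k → Bool) (j : ℕ) : ℤ :=
  a + ∑ i ∈ Finset.range j, if h : i < k then sg (δ ⟨i, h⟩) else 0

/-- Fused dual intertwining vector component `ψ*^{(k)}_μ(u)^b_a`
(sum over all admissible paths from `a` to `b`; zero if not admissible). -/
def psiStarF (τ : ℂ) (r : ℝ) (k : ℕ) (μ : ℤ) (u : ℂ) (b a : ℤ) : ℂ :=
  if adm k a b then
    ∑ δ ∈ Finset.univ.filter fun δ : Fin k → Bool => (∑ j, sg (δ j)) = b - a,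
      ∏ j : Fin k,
        psiStar τ r (u + (k : ℂ) - (((j : ℕ) + 1 : ℕ) : ℂ))
          (if ((j : ℕ) + 1 : ℤ) ≤ ((k : ℤ) + μ) / 2 then 1 else -1)
          (spath k a δ ((j : ℕ) + 1)) (spath k a δ (j : ℕ))
  else 0

/-- The `L`-matrix `L^{(k)}(a,b;c,d|u) = Σ_μ ψ*^{(k)}_μ(u)^d_c ψ^{(k)}_μ(u)^a_b`. -/
def Lk (τ : ℂ) (r : ℝ) (k : ℕ) (u : ℂ) (a b c d : ℤ) : ℂ :=
  ∑ i ∈ Finset.range (k + 1),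
    psiStarF τ r k ((k : ℤ) - 2 * (i : ℤ)) u d c * psiF τ r k ((k : ℤ) - 2 * (i : ℤ)) u a b

/-- Normalized face weight `W̄(a,b;d,c|u)` (arguments ordered (NW, NE; SW, SE)). -/
def Wb (τ : ℂ) (r : ℝ) (u : ℂ) (a b d c : ℤ) : ℂ :=
  if b = a + 1 ∧ d = a + 1 ∧ c = a + 2 then 1
  else if b = a - 1 ∧ d = a - 1 ∧ c = a - 2 then 1
  else if b = a + 1 ∧ d = a + 1 ∧ c = a then
    br τ r ((a : ℂ) - u) * br τ r 1 / (br τ r (a : ℂ) * br τ r (1 + u))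
  else if b = a - 1 ∧ d = a - 1 ∧ c = a then
    br τ r ((a : ℂ) + u) * br τ r 1 / (br τ r (a : ℂ) * br τ r (1 + u))
  else if b = a + 1 ∧ d = a - 1 ∧ c = a then
    br τ r ((a : ℂ) + 1) * br τ r u / (br τ r (a : ℂ) * br τ r (1 + u))
  else if b = a - 1 ∧ d = a + 1 ∧ c = a then
    br τ r ((a : ℂ) - 1) * br τ r u / (br τ r (a : ℂ) * br τ r (1 + u))
  else 0

/-- Sequence with prescribed endpoints `d`, `c` and free interior values `f`. -/
def seqI (k : ℕ) (d c : ℤ) (f : Fin (k - 1) → ℤ) (j : ℕ) : ℤ :=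
  if h0 : j = 0 then d
  else if hj : j < k then f ⟨j - 1, by omega⟩ else c

/-- Fused face weight `W^{(k,1)}(a,b;d,c|u)`. -/
def Wk1 (τ : ℂ) (r : ℝ) (k : ℕ) (u : ℂ) (a b d c : ℤ) : ℂ :=
  if adm k a b then
    ∑' f : Fin (k - 1) → ℤ,
      ∏ j ∈ Finset.range k,
        Wb τ r (u + (k : ℂ) - ((j : ℂ) + 1))
          (cpathZ a (((k : ℤ) - (a - b)) / 2) j)
          (cpathZ a (((k : ℤ) - (a - b)) / 2) (j + 1))
          (seqI k d c f j) (seqI k d c f (j + 1))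
  else 0

/-- Fused face weight `W^{(k,l)}(a,b;d,c|u)`. -/
def Wkl (τ : ℂ) (r : ℝ) (k l : ℕ) (u : ℂ) (a b d c : ℤ) : ℂ :=
  if adm l b c then
    ∑' g : Fin (l - 1) → ℤ,
      ∏ i ∈ Finset.range l,
        Wk1 τ r k (u - (l : ℂ) + ((i : ℂ) + 1))
          (seqI l a d g i) (cpathZ b (((l : ℤ) - (b - c)) / 2) i)
          (seqI l a d g (i + 1)) (cpathZ b (((l : ℤ) - (b - c)) / 2) (i + 1))
  else 0

/-- Eight-vertex weight `ā(u)`. -/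
def aw (τ : ℂ) (r : ℝ) (u : ℂ) : ℂ :=
  th2 (1 / (2 * (r : ℂ))) (τ / 2) * th2 (u / (2 * (r : ℂ))) (τ / 2) /
    (th2 0 (τ / 2) * th2 ((1 + u) / (2 * (r : ℂ))) (τ / 2))

/-- Eight-vertex weight `b̄(u)`. -/
def bw (τ : ℂ) (r : ℝ) (u : ℂ) : ℂ :=
  th2 (1 / (2 * (r : ℂ))) (τ / 2) * th1 (u / (2 * (r : ℂ))) (τ / 2) /
    (th2 0 (τ / 2) * th1 ((1 + u) / (2 * (r : ℂ))) (τ / 2))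

/-- Eight-vertex weight `c̄(u)`. -/
def cw (τ : ℂ) (r : ℝ) (u : ℂ) : ℂ :=
  th1 (1 / (2 * (r : ℂ))) (τ / 2) * th2 (u / (2 * (r : ℂ))) (τ / 2) /
    (th2 0 (τ / 2) * th1 ((1 + u) / (2 * (r : ℂ))) (τ / 2))

/-- Eight-vertex weight `d̄(u)`. -/
def dw (τ : ℂ) (r : ℝ) (u : ℂ) : ℂ :=
  -(th1 (1 / (2 * (r : ℂ))) (τ / 2) * th1 (u / (2 * (r : ℂ))) (τ / 2)) /
    (th2 0 (τ / 2) * th2 ((1 + u) / (2 * (r : ℂ))) (τ / 2))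

/-- The normalized eight-vertex `R`-matrix entry `R̄(u)_{(ε₁,ε₂),(ε₁',ε₂')}`. -/
def Rbar (τ : ℂ) (r : ℝ) (u : ℂ) (e1 e2 e1' e2' : ℤ) : ℂ :=
  if e1' = e1 ∧ e2' = e2 ∧ e1 = e2 then aw τ r u
  else if e1' = e1 ∧ e2' = e2 ∧ e1 = -e2 then bw τ r u
  else if e1' = e2 ∧ e2' = e1 ∧ e1 = -e2 then cw τ r u
  else if e1' = -e1 ∧ e2' = -e2 ∧ e1 = e2 then dw τ r u
  else 0

/-- Sklyanin standard-basis vector `v_+(z)`. -/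
def vp (τ z : ℂ) : ℂ := th3 (2 * z) (2 * τ) - th2 (2 * z) (2 * τ)

/-- Sklyanin standard-basis vector `v_-(z)`. -/
def vm (τ z : ℂ) : ℂ := th3 (2 * z) (2 * τ) + th2 (2 * z) (2 * τ)


open Filter Topology in
lemma qpoch_tendsto {q : ℂ} (hq : ‖q‖ < 1) :
    ∃ L : ℂ, L ≠ 0 ∧ Tendsto (fun N : ℕ => ∏ j ∈ Finset.range N, (1 - q ^ (j + 1))) atTop (𝓝 L) := by
  refine ⟨∏' j : ℕ, (1 - q ^ (j + 1)), ?_, ?_⟩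
  · have := tprod_one_add_ne_zero_of_summable (f := fun n : ℕ => -q ^ (n + 1)) ?_ ?_
    · simpa [sub_eq_add_neg] using this
    · intro n h
      have h1 : q ^ (n + 1) = 1 := by linear_combination -h
      have h2 : ‖q ^ (n + 1)‖ < 1 := by
        rw [norm_pow]; exact pow_lt_one₀ (norm_nonneg _) hq (by omega)
      rw [h1] at h2; simp at h2
    · simpa using (summable_nat_add_iff 1).mpr (summable_geometric_of_lt_one (norm_nonneg _) hq)
  · exact (ModularForm.multipliable_one_sub_pow hq).hasProd.tendsto_prod_nat

/-- inverse q-Pochhammer on integers -/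
def Gq (q : ℂ) (m : ℤ) : ℂ :=
  if 0 ≤ m then (∏ j ∈ Finset.range m.toNat, (1 - q ^ (j + 1)))⁻¹ else 0

lemma one_sub_pow_ne {q : ℂ} (hq : ‖q‖ < 1) (n : ℕ) : 1 - q ^ (n + 1) ≠ 0 := by
  intro h
  have h1 : q ^ (n + 1) = 1 := by linear_combination -h
  have h2 : ‖q ^ (n + 1)‖ < 1 := by
    rw [norm_pow]; exact pow_lt_one₀ (norm_nonneg _) hq (by omega)
  rw [h1] at h2; simp at h2

lemma Gq_rec {q : ℂ} (hq : ‖q‖ < 1) (m : ℤ) : Gq q (m - 1) = (1 - q ^ m) * Gq q m := by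
  unfold Gq
  rcases lt_trichotomy m 0 with h | h | h
  · rw [if_neg (by omega), if_neg (by omega), mul_zero]
  · subst h; simp
  · obtain ⟨n, rfl⟩ : ∃ n : ℕ, m = n + 1 := ⟨(m - 1).toNat, by omega⟩
    rw [if_pos (by omega), if_pos (by omega)]
    have e1 : ((n : ℤ) + 1 - 1).toNat = n := by omega
    have e2 : ((n : ℤ) + 1).toNat = n + 1 := by omega
    rw [e1, e2, Finset.prod_range_succ, mul_inv]
    have := one_sub_pow_ne hq n
    have e3 : q ^ ((n : ℤ) + 1) = q ^ (n + 1) := by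
      rw [← zpow_natCast]; push_cast; rfl
    rw [e3]
    field_simp

/-- Laurent coefficient of the finite triple product -/
def Aq (q : ℂ) (N : ℕ) (n : ℤ) : ℂ :=
  (∏ j ∈ Finset.range (2 * N), (1 - q ^ (j + 1))) * Gq q (N + n) * Gq q (N - n)

lemma Aq_rec {q : ℂ} (hq0 : q ≠ 0) (hq : ‖q‖ < 1) (N : ℕ) (n : ℤ) :
    Aq q (N + 1) n = (1 + q ^ (2 * N + 1)) * Aq q N n + q ^ ((N : ℤ) + 1 - n) * Aq q N (n - 1)
      + q ^ ((N : ℤ) + 1 + n) * Aq q N (n + 1) := by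
  unfold Aq
  have e1 : Gq q ((N : ℤ) + n) = (1 - q ^ ((N : ℤ) + 1 + n)) * Gq q ((N : ℤ) + 1 + n) := by
    rw [← Gq_rec hq]; congr 1; ring
  have e2 : Gq q ((N : ℤ) - n) = (1 - q ^ ((N : ℤ) + 1 - n)) * Gq q ((N : ℤ) + 1 - n) := by
    rw [← Gq_rec hq]; congr 1; ring
  have e3 : Gq q ((N : ℤ) + (n - 1)) =
      (1 - q ^ ((N : ℤ) + 1 + n) / q) * ((1 - q ^ ((N : ℤ) + 1 + n)) * Gq q ((N : ℤ) + 1 + n)) := by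
    rw [← e1, div_eq_mul_inv, ← zpow_sub_one₀ hq0]
    rw [show (N : ℤ) + 1 + n - 1 = N + n by ring, ← Gq_rec hq]; congr 1; ring
  have e4 : Gq q ((N : ℤ) - (n + 1)) =
      (1 - q ^ ((N : ℤ) + 1 - n) / q) * ((1 - q ^ ((N : ℤ) + 1 - n)) * Gq q ((N : ℤ) + 1 - n)) := by
    rw [← e2, div_eq_mul_inv, ← zpow_sub_one₀ hq0]
    rw [show (N : ℤ) + 1 - n - 1 = N - n by ring, ← Gq_rec hq]; congr 1; ring
  have e5 : (N : ℤ) - (n - 1) = N + 1 - n := by ring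
  have e6 : (N : ℤ) + (n + 1) = N + 1 + n := by ring
  have e7 : q ^ (2 * N + 1) = q ^ ((N : ℤ) + 1 + n) * q ^ ((N : ℤ) + 1 - n) / q := by
    rw [← zpow_add₀ hq0, div_eq_mul_inv, ← zpow_sub_one₀ hq0, ← zpow_natCast]; congr 1; push_cast; ring
  rw [e3, e4, e5, e6, e1, e2, show 2 * (N + 1) = 2 * N + 1 + 1 by ring, Finset.prod_range_succ,
    Finset.prod_range_succ, pow_succ q (2 * N + 1), e7]
  push_cast
  field_simp
  ring

/-- theta term -/
def Tq (σ v : ℂ) (n : ℤ) : ℂ := jacobiTheta₂_term n (v + 1 / 2 - σ / 2) σ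

lemma Tq_succ (σ v : ℂ) (n : ℤ) : Tq σ v (n + 1) =
    - (cexp (2 * Real.pi * I * v) * cexp (2 * Real.pi * I * σ) ^ n) * Tq σ v n := by
  unfold Tq jacobiTheta₂_term
  rw [← Complex.exp_int_mul, neg_mul, ← neg_one_mul, ← Complex.exp_pi_mul_I, ← Complex.exp_add,
    ← Complex.exp_add, ← Complex.exp_add]
  congr 1; push_cast; ring

lemma Aq_zero_of {q : ℂ} {N : ℕ} {n : ℤ} (h : (N : ℤ) < |n|) : Aq q N n = 0 := by
  unfold Aq Gq
  rcases lt_abs.1 h with h | h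
  · rw [if_neg (show ¬ (0 : ℤ) ≤ N - n by omega)]; simp
  · rw [if_neg (show ¬ (0 : ℤ) ≤ N + n by omega)]; simp

lemma summable_AT (q σ v : ℂ) (N : ℕ) : Summable fun n : ℤ => Aq q N n * Tq σ v n := by
  apply summable_of_ne_finset_zero (s := Finset.Icc (-(N : ℤ)) N)
  intro n hn
  rw [Aq_zero_of, zero_mul]
  by_contra h
  exact hn (Finset.mem_Icc.2 (abs_le.1 (not_lt.1 h)))

lemma finite_triple (σ v : ℂ) (hσ : 0 < σ.im) (N : ℕ) :
    ∏ j ∈ Finset.range N, ((1 - cexp (2 * Real.pi * I * v) * cexp (2 * Real.pi * I * σ) ^ j) *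
      (1 - cexp (2 * Real.pi * I * σ) ^ (j + 1) / cexp (2 * Real.pi * I * v))) =
    ∑' n : ℤ, Aq (cexp (2 * Real.pi * I * σ)) N n * Tq σ v n := by
  have hq0 : cexp (2 * Real.pi * I * σ) ≠ 0 := Complex.exp_ne_zero _
  have hz0 : cexp (2 * Real.pi * I * v) ≠ 0 := Complex.exp_ne_zero _
  have hq : ‖cexp (2 * Real.pi * I * σ)‖ < 1 := UpperHalfPlane.norm_exp_two_pi_I_lt_one ⟨σ, hσ⟩
  have hT := Tq_succ σ v
  have hs := fun N => summable_AT (cexp (2 * Real.pi * I * σ)) σ v N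
  set q := cexp (2 * Real.pi * I * σ)
  set z := cexp (2 * Real.pi * I * v)
  induction N with
  | zero =>
    rw [tsum_eq_single 0]
    · simp [Aq, Gq, Tq, jacobiTheta₂_term]
    · intro n hn
      rw [Aq_zero_of, zero_mul]; simpa using hn
  | succ N ih =>
    rw [Finset.prod_range_succ, ih]
    have h1 : ∑' n : ℤ, Aq q N (n - 1) * Tq σ v (n - 1) = ∑' n : ℤ, Aq q N n * Tq σ v n :=
      (Equiv.subRight (1 : ℤ)).tsum_eq (fun n => Aq q N n * Tq σ v n)
    have h2 : ∑' n : ℤ, Aq q N (n + 1) * Tq σ v (n + 1) = ∑' n : ℤ, Aq q N n * Tq σ v n :=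
      (Equiv.addRight (1 : ℤ)).tsum_eq (fun n => Aq q N n * Tq σ v n)
    have s1 : Summable fun n : ℤ => Aq q N (n - 1) * Tq σ v (n - 1) :=
      ((Equiv.subRight (1 : ℤ)).summable_iff (f := fun n => Aq q N n * Tq σ v n)).2 (hs N)
    have s2 : Summable fun n : ℤ => Aq q N (n + 1) * Tq σ v (n + 1) :=
      ((Equiv.addRight (1 : ℤ)).summable_iff (f := fun n => Aq q N n * Tq σ v n)).2 (hs N)
    have key : ∀ n, Aq q (N + 1) n * Tq σ v n = (1 + q ^ (2 * N + 1)) * (Aq q N n * Tq σ v n)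
        + ((- (z * q ^ N)) * (Aq q N (n - 1) * Tq σ v (n - 1))
          + (- (q ^ (N + 1) / z)) * (Aq q N (n + 1) * Tq σ v (n + 1))) := by
      intro n
      have t1 := hT (n - 1)
      rw [sub_add_cancel] at t1
      have t2 := hT n
      rw [Aq_rec hq0 hq, t2]
      have a1 : q ^ ((N : ℤ) + 1 - n) * Tq σ v n = (- (z * q ^ N)) * Tq σ v (n - 1) := by
        rw [t1, zpow_sub₀ hq0, zpow_sub_one₀ hq0, zpow_add_one₀ hq0, zpow_natCast]
        have := zpow_ne_zero n hq0
        field_simp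
      have a2 : q ^ ((N : ℤ) + 1 + n) = (q ^ (N + 1) / z) * (z * q ^ n) := by
        rw [zpow_add₀ hq0, zpow_add_one₀ hq0, zpow_natCast]
        field_simp
        ring
      rw [a2]
      generalize q ^ ((N : ℤ) + 1 - n) = X at *
      generalize Tq σ v n = T0 at *
      generalize Tq σ v (n - 1) = T1 at *
      generalize q ^ n = Y at *
      linear_combination (Aq q N (n - 1)) * a1
    rw [tsum_congr key, Summable.tsum_add ((hs N).mul_left _) ((s1.mul_left _).add (s2.mul_left _)),
      Summable.tsum_add (s1.mul_left _) (s2.mul_left _), tsum_mul_left, tsum_mul_left, tsum_mul_left,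
      h1, h2]
    have : (1 - z * q ^ N) * (1 - q ^ (N + 1) / z) =
        (1 + q ^ (2 * N + 1)) - z * q ^ N - q ^ (N + 1) / z := by
      field_simp; ring
    rw [this]; ring

open Filter Topology in
lemma triple (σ : ℂ) (hσ : 0 < σ.im) : ∃ c : ℂ, ∀ v : ℂ, Tendsto (fun N : ℕ =>
    ∏ j ∈ Finset.range N, ((1 - cexp (2 * Real.pi * I * v) * cexp (2 * Real.pi * I * σ) ^ j) *
      (1 - cexp (2 * Real.pi * I * σ) ^ (j + 1) / cexp (2 * Real.pi * I * v)))) atTop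
    (𝓝 (c * jacobiTheta₂ (v + 1 / 2 - σ / 2) σ)) := by
  have hq : ‖cexp (2 * Real.pi * I * σ)‖ < 1 := UpperHalfPlane.norm_exp_two_pi_I_lt_one ⟨σ, hσ⟩
  obtain ⟨L, hL0, hL⟩ := qpoch_tendsto hq
  refine ⟨L * L⁻¹ * L⁻¹, fun v => ?_⟩
  simp_rw [finite_triple σ v hσ]
  set q := cexp (2 * Real.pi * I * σ)
  have hLi := hL.inv₀ hL0
  obtain ⟨M1, hM1⟩ := hL.norm.bddAbove_range
  obtain ⟨M2, hM2⟩ := hLi.norm.bddAbove_range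
  have hM1' : ∀ N, ‖∏ j ∈ Finset.range N, (1 - q ^ (j + 1))‖ ≤ M1 := fun N => hM1 ⟨N, rfl⟩
  have hM2' : ∀ N, ‖(∏ j ∈ Finset.range N, (1 - q ^ (j + 1)))⁻¹‖ ≤ M2 := fun N => hM2 ⟨N, rfl⟩
  have M1n : 0 ≤ M1 := (norm_nonneg _).trans (hM1' 0)
  have M2n : 0 ≤ M2 := (norm_nonneg _).trans (hM2' 0)
  have hG : ∀ m, ‖Gq q m‖ ≤ M2 := by
    intro m; unfold Gq; split_ifs
    · exact hM2' _
    · simpa using M2n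
  have hA : ∀ N n, ‖Aq q N n‖ ≤ M1 * M2 * M2 := by
    intro N n; unfold Aq; rw [norm_mul, norm_mul]
    gcongr
    · exact hM1' _
    · exact hG _
    · exact hG _
  have hGt : Tendsto (Gq q) atTop (𝓝 L⁻¹) := by
    have h1 : Tendsto (fun m : ℤ => (∏ j ∈ Finset.range m.toNat, (1 - q ^ (j + 1)))⁻¹) atTop (𝓝 L⁻¹) :=
      hLi.comp (tendsto_atTop_atTop.2 fun b => ⟨b, fun m hm => by omega⟩)
    refine h1.congr' ?_
    filter_upwards [eventually_ge_atTop 0] with m hm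
    simp [Gq, hm]
  have hsum : Summable (Tq σ v) := (summable_jacobiTheta₂_term_iff _ _).2 hσ
  have : L * L⁻¹ * L⁻¹ * jacobiTheta₂ (v + 1 / 2 - σ / 2) σ = ∑' n, L * L⁻¹ * L⁻¹ * Tq σ v n := by
    rw [tsum_mul_left]; rfl
  rw [this]
  refine tendsto_tsum_of_dominated_convergence (bound := fun n => M1 * M2 * M2 * ‖Tq σ v n‖)
    (hsum.norm.mul_left _) ?_ ?_
  · intro n
    refine Tendsto.mul_const _ ?_
    unfold Aq
    refine ((hL.comp ?_).mul (hGt.comp ?_)).mul (hGt.comp ?_)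
    · exact tendsto_atTop_atTop.2 fun b => ⟨b, fun m hm => by omega⟩
    · exact tendsto_atTop_atTop.2 fun b => ⟨(b - n).toNat, fun m hm => by omega⟩
    · exact tendsto_atTop_atTop.2 fun b => ⟨(b + n).toNat, fun m hm => by omega⟩
  · refine Eventually.of_forall fun N n => ?_
    rw [norm_mul]
    exact mul_le_mul_of_nonneg_right (hA N n) (norm_nonneg _)

/-- path sum as a list recursion -/
def TL (w : Bool → ℂ → ℤ → ℤ → ℂ) (u : ℂ) (d : ℤ) : List Bool → ℤ → ℂ
  | [], c => if c = d then 1 else 0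
  | e :: l, c => w e (u + l.length) (c + 1) c * TL w u d l (c + 1)
      + w e (u + l.length) (c - 1) c * TL w u d l (c - 1)

lemma TL_perm (w : Bool → ℂ → ℤ → ℤ → ℂ) (u : ℂ) (d : ℤ) (P : ℤ → Prop)
    (h1 : ∀ e e' v c, w e (v + 1) (c + 1) c * w e' v (c + 1 + 1) (c + 1) =
      w e' (v + 1) (c + 1) c * w e v (c + 1 + 1) (c + 1))
    (h2 : ∀ e e' v c, w e (v + 1) (c - 1) c * w e' v (c - 1 - 1) (c - 1) =
      w e' (v + 1) (c - 1) c * w e v (c - 1 - 1) (c - 1))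
    (h3 : ∀ e e' v c, P (c + 1) → P (c - 1) →
      w e (v + 1) (c + 1) c * w e' v (c + 1 - 1) (c + 1) +
        w e (v + 1) (c - 1) c * w e' v (c - 1 + 1) (c - 1) =
      w e' (v + 1) (c + 1) c * w e v (c + 1 - 1) (c + 1) +
        w e' (v + 1) (c - 1) c * w e v (c - 1 + 1) (c - 1))
    {l l' : List Bool} (hl : l.Perm l') :
    ∀ c, (∀ s : ℤ, |s - c| ≤ (l.length : ℤ) → P s) → TL w u d l c = TL w u d l' c := by
  induction hl with
  | nil => intros; rfl
  | cons x h ih =>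
    intro c hP
    simp only [TL]
    rw [ih (c + 1), ih (c - 1), h.length_eq]
    · intro s hs; apply hP; simp only [List.length_cons]; push_cast; rw [abs_le] at *; omega
    · intro s hs; apply hP; simp only [List.length_cons]; push_cast; rw [abs_le] at *; omega
  | swap x y l =>
    intro c hP
    simp only [TL, List.length_cons]
    have g1 := h1 x y (u + l.length) c
    have g2 := h2 x y (u + l.length) c
    have g3 := h3 x y (u + l.length) c
      (hP _ (by simp only [List.length_cons]; push_cast; rw [abs_le]; omega))
      (hP _ (by simp only [List.length_cons]; push_cast; rw [abs_le]; omega))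
    push_cast
    rw [← add_assoc]
    rw [show c + 1 - 1 = c by ring, show c - 1 + 1 = c by ring] at *
    linear_combination (-TL w u d l (c + 1 + 1)) * g1 - (TL w u d l (c - 1 - 1)) * g2
      - (TL w u d l c) * g3
  | trans h h' ih ih' =>
    intro c hP
    rw [ih c hP, ih' c (by rw [← h.length_eq]; exact hP)]

lemma spath_cons_succ (k : ℕ) (c : ℤ) (s : Bool) (δ : Fin k → Bool) (j : ℕ) :
    spath (k + 1) c (Fin.cons s δ : Fin (k + 1) → Bool) (j + 1) = spath k (c + sg s) δ j := by
  unfold spath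
  rw [Finset.sum_range_succ', add_assoc, add_comm (sg s)]
  congr 2
  apply Finset.sum_congr rfl
  intro i hi
  by_cases h : i < k
  · rw [dif_pos h, dif_pos (by omega)]
    congr 1
  · rw [dif_neg h, dif_neg (by omega)]

lemma spath_zero (k : ℕ) (c : ℤ) (δ : Fin k → Bool) : spath k c δ 0 = c := by
  simp [spath]

lemma sum_eq_TL (w : Bool → ℂ → ℤ → ℤ → ℂ) (u : ℂ) (d : ℤ) (k : ℕ) :
    ∀ (c : ℤ) (ε : Fin k → Bool),
    ∑ δ ∈ Finset.univ.filter (fun δ : Fin k → Bool => (∑ j, sg (δ j)) = d - c),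
      ∏ j : Fin k, w (ε j) (u + (k : ℂ) - (((j : ℕ) + 1 : ℕ) : ℂ))
        (spath k c δ ((j : ℕ) + 1)) (spath k c δ (j : ℕ)) = TL w u d (List.ofFn ε) c := by
  induction k with
  | zero =>
    intro c ε
    simp only [TL, List.ofFn_zero]
    rw [Finset.sum_filter]
    simp [sub_eq_zero, eq_comm]
  | succ k ih =>
    intro c ε
    rw [Finset.sum_filter, ← (Fin.consEquiv (fun _ : Fin (k + 1) => Bool)).sum_comp,
      Fintype.sum_prod_type]
    have key : ∀ s : Bool, ∑ δ : Fin k → Bool,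
        (if ∑ j, sg ((Fin.cons s δ : Fin (k + 1) → Bool) j) = d - c then
          ∏ j : Fin (k + 1), w (ε j) (u + ((k + 1 : ℕ) : ℂ) - (((j : ℕ) + 1 : ℕ) : ℂ))
            (spath (k + 1) c (Fin.cons s δ : Fin (k + 1) → Bool) ((j : ℕ) + 1))
            (spath (k + 1) c (Fin.cons s δ : Fin (k + 1) → Bool) (j : ℕ)) else 0) =
        w (ε 0) (u + k) (c + sg s) c * TL w u d (List.ofFn (Fin.tail ε)) (c + sg s) := by
      intro s
      rw [← ih (c + sg s) (Fin.tail ε), Finset.sum_filter, Finset.mul_sum]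
      apply Finset.sum_congr rfl
      intro δ _
      rw [Fin.sum_univ_succ]
      simp only [Fin.cons_zero, Fin.cons_succ]
      by_cases h : ∑ j, sg (δ j) = d - (c + sg s)
      · rw [if_pos h, if_pos (by rw [h]; ring), Fin.prod_univ_succ]
        simp only [Fin.val_zero, Fin.val_succ, spath_cons_succ, spath_zero, Fin.tail]
        congr 1
        · congr 1; push_cast; ring
        · apply Finset.prod_congr rfl
          intro j _
          congr 1; push_cast; ring
      · rw [if_neg h, if_neg (by intro h'; apply h; linarith), mul_zero]
    rw [Fintype.sum_bool]
    refine (congrArg₂ (· + ·) (key true) (key false)).trans ?_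
    rw [List.ofFn_succ]
    simp only [TL, List.length_ofFn]
    rfl

lemma sum_sg_ofFn (k : ℕ) (ε : Fin k → Bool) :
    ∑ j, sg (ε j) = 2 * ((List.ofFn ε).count true : ℤ) - k := by
  induction k with
  | zero => simp
  | succ k ih =>
    rw [Fin.sum_univ_succ, List.ofFn_succ, List.count_cons, ih]
    cases h : ε 0 <;> simp [sg] <;> ring

lemma perm_of_sum (k : ℕ) (ε ε' : Fin k → Bool) (h : ∑ j, sg (ε j) = ∑ j, sg (ε' j)) :
    (List.ofFn ε).Perm (List.ofFn ε') := by
  rw [List.perm_iff_count]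
  rw [sum_sg_ofFn, sum_sg_ofFn] at h
  have ht : (List.ofFn ε).count true = (List.ofFn ε').count true := by omega
  have l1 := List.count_true_add_count_false (List.ofFn ε)
  have l2 := List.count_true_add_count_false (List.ofFn ε')
  simp only [List.length_ofFn] at l1 l2
  intro a; cases a
  · omega
  · exact ht

lemma sum_eps0 (t N : ℕ) : ∑ j ∈ Finset.range N, sg (decide (((j : ℕ) + 1 : ℤ) ≤ (t : ℤ))) =
    2 * (min t N : ℤ) - N := by
  induction N with
  | zero => simp
  | succ N ih =>
    rw [Finset.sum_range_succ, ih]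
    by_cases h : N + 1 ≤ t
    · have : ((N : ℤ) + 1 ≤ t) := by omega
      rw [sg, if_pos (by simpa using this)]; push_cast; omega
    · have : ¬ ((N : ℤ) + 1 ≤ t) := by omega
      rw [sg, if_neg (by simpa using this)]; push_cast; omega

lemma mult_geom {q : ℂ} (hq : ‖q‖ < 1) (y : ℂ) : Multipliable fun n : ℕ => 1 - q ^ n * y := by
  have := multipliable_one_add_of_summable (f := fun n : ℕ => -(q ^ n * y)) ?_
  · simpa [sub_eq_add_neg] using this
  · simpa using (summable_geometric_of_lt_one (norm_nonneg _) hq).mul_right ‖y‖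

open Filter Topology in
lemma th1_eq (σ : ℂ) (hσ : 0 < σ.im) : ∃ K : ℂ, ∀ v, th1 v σ =
    K * (cexp (-(Real.pi * I * v)) * jacobiTheta₂ (v + 1 / 2 - σ / 2) σ) := by
  obtain ⟨c, hc⟩ := triple σ hσ
  have hq : ‖cexp (2 * Real.pi * I * σ)‖ < 1 := UpperHalfPlane.norm_exp_two_pi_I_lt_one ⟨σ, hσ⟩
  refine ⟨2 * Complex.exp (2 * (Real.pi : ℂ) * Complex.I * σ / 8) *
    (∏' n : ℕ, (1 - Complex.exp (2 * (Real.pi : ℂ) * Complex.I * σ) ^ (n + 1))) * (I / 2) * c,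
    fun v => ?_⟩
  have hcv := hc v
  unfold th1
  set q := cexp (2 * Real.pi * I * σ)
  have hz0 : cexp (2 * Real.pi * I * v) ≠ 0 := Complex.exp_ne_zero _
  have hcos : 2 * Complex.cos (2 * Real.pi * v) =
      cexp (2 * Real.pi * I * v) + (cexp (2 * Real.pi * I * v))⁻¹ := by
    rw [Complex.two_cos, ← Complex.exp_neg]; congr 2 <;> ring
  have hsin : Complex.sin (Real.pi * v) =
      (I / 2) * cexp (-(Real.pi * I * v)) * (1 - cexp (2 * Real.pi * I * v)) := by
    have e : cexp (2 * Real.pi * I * v) = cexp (Real.pi * I * v) * cexp (Real.pi * I * v) := by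
      rw [← Complex.exp_add]; congr 1; ring
    have e2 : cexp (-(Real.pi * I * v)) * cexp (Real.pi * I * v) = 1 := by
      rw [← Complex.exp_add]; simp
    rw [Complex.sin, e, show -(Real.pi * v : ℂ) * I = -(Real.pi * I * v) by ring,
      show (Real.pi * v : ℂ) * I = (Real.pi * I * v) by ring]
    linear_combination (I / 2 * cexp (Real.pi * I * v)) * e2
  set z := cexp (2 * Real.pi * I * v)
  have hfac : ∀ n : ℕ, (1 - 2 * q ^ (n + 1) * Complex.cos (2 * Real.pi * v) + q ^ (2 * (n + 1))) =
      (1 - q ^ n * (q * z)) * (1 - q ^ n * (q / z)) := by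
    intro n
    rw [show 2 * q ^ (n + 1) * Complex.cos (2 * Real.pi * v) =
      q ^ (n + 1) * (2 * Complex.cos (2 * Real.pi * v)) by ring, hcos]
    field_simp
    ring
  have hm : Multipliable fun n : ℕ => (1 - q ^ n * (q * z)) * (1 - q ^ n * (q / z)) :=
    (mult_geom hq _).mul (mult_geom hq _)
  have hQ := hm.hasProd.tendsto_prod_nat
  have hrel : ∀ N : ℕ, (1 - z) * ∏ n ∈ Finset.range N, ((1 - q ^ n * (q * z)) * (1 - q ^ n * (q / z)))
      = (∏ j ∈ Finset.range N, ((1 - z * q ^ j) * (1 - q ^ (j + 1) / z))) * (1 - z * q ^ N) := by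
    intro N
    induction N with
    | zero => simp
    | succ N ih =>
      rw [Finset.prod_range_succ, ← mul_assoc, ih, Finset.prod_range_succ]
      ring
  have h1 : Tendsto (fun N : ℕ => 1 - z * q ^ N) atTop (𝓝 1) := by
    have := (tendsto_pow_atTop_nhds_zero_of_norm_lt_one hq).const_mul z
    simpa using this.const_sub 1
  have hlim := tendsto_nhds_unique ((hQ.const_mul (1 - z)).congr hrel) (hcv.mul h1)
  rw [tprod_congr hfac, hsin]
  rw [mul_one] at hlim
  linear_combination (2 * Complex.exp (2 * (Real.pi : ℂ) * Complex.I * σ / 8) *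
    (∏' n : ℕ, (1 - q ^ (n + 1))) * (I / 2) * cexp (-(Real.pi * I * v))) * hlim

lemma th03_eq (σ : ℂ) (hσ : 0 < σ.im) : ∃ K0 K3 : ℂ, ∀ v, th0 v σ = K0 * jacobiTheta₂ (v + 1 / 2) σ
    ∧ th3 v σ = K3 * jacobiTheta₂ v σ := by
  obtain ⟨K, hK⟩ := th1_eq σ hσ
  refine ⟨-I * K * cexp (Real.pi * I * (σ / 4 - σ / 2)),
    K * cexp (Real.pi * I * (σ / 4 - (σ + 1) / 2)), fun v => ⟨?_, ?_⟩⟩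
  · rw [th0, hK, show v + σ / 2 + 1 / 2 - σ / 2 = v + 1 / 2 by ring]
    have : cexp (Real.pi * I * (σ / 4 - σ / 2)) =
        cexp (Real.pi * I * (v + σ / 4)) * cexp (-(Real.pi * I * (v + σ / 2))) := by
      rw [← Complex.exp_add]; congr 1; ring
    rw [this]; ring
  · rw [th3, hK, show v + (σ + 1) / 2 + 1 / 2 - σ / 2 = v + 1 by ring, jacobiTheta₂_add_left]
    have : cexp (Real.pi * I * (σ / 4 - (σ + 1) / 2)) =
        cexp (Real.pi * I * (v + σ / 4)) * cexp (-(Real.pi * I * (v + (σ + 1) / 2))) := by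
      rw [← Complex.exp_add]; congr 1; ring
    rw [this]; ring

/-- odd theta function -/
def Eo (τ w : ℂ) : ℂ := cexp (-(Real.pi * I * w)) * jacobiTheta₂ (τ / 2 + 1 / 2 - w) τ

open Filter Topology in
lemma br_eq (τ : ℂ) (r : ℝ) (hτ : 0 < τ.im) (hr : 0 < r) :
    ∃ K : ℂ, ∀ u, br τ r u = K * Eo τ (u / r) := by
  have hτ0 : τ ≠ 0 := by rintro rfl; simp at hτ
  have hr0 : (r : ℂ) ≠ 0 := by exact_mod_cast hr.ne'
  have hσ : 0 < (-1 / τ).im := by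
    rw [neg_div, Complex.neg_im, one_div, Complex.inv_im, neg_div, neg_neg]
    exact div_pos hτ (Complex.normSq_pos.2 hτ0)
  obtain ⟨c, hc⟩ := triple (-1 / τ) hσ
  have hq : ‖cexp (2 * Real.pi * I * (-1 / τ))‖ < 1 :=
    UpperHalfPlane.norm_exp_two_pi_I_lt_one ⟨-1 / τ, hσ⟩
  obtain ⟨L, hL0, hL⟩ := qpoch_tendsto hq
  have hs0 : (-I * τ) ^ (1 / 2 : ℂ) ≠ 0 := by
    rw [Ne, Complex.cpow_eq_zero_iff]; simp [hτ0]
  refine ⟨c * L * (-I * τ) ^ (1 / 2 : ℂ) * cexp (Real.pi * I * (τ + 1) ^ 2 / (4 * τ)), fun u => ?_⟩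
  have hp : xp τ r (2 * r) = cexp (2 * Real.pi * I * (-1 / τ)) := by
    unfold xp; congr 1; field_simp
  have hx : xp τ r (2 * u) = cexp (2 * Real.pi * I * (-(u / (r * τ)))) := by
    unfold xp; congr 1; field_simp
  have hTh : Theta (xp τ r (2 * r)) (xp τ r (2 * u)) =
      c * jacobiTheta₂ (-(u / (r * τ)) + 1 / 2 - (-1 / τ) / 2) (-1 / τ) * L := by
    rw [hp, hx]
    have hcv := hc (-(u / (r * τ)))
    unfold Theta
    set q := cexp (2 * Real.pi * I * (-1 / τ))
    set z := cexp (2 * Real.pi * I * (-(u / (r * τ))))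
    have hm : Multipliable fun j : ℕ => (1 - z * q ^ j) * (1 - q ^ (j + 1) / z) * (1 - q ^ (j + 1)) := by
      have := ((mult_geom hq z).mul (mult_geom hq (q / z))).mul (mult_geom hq q)
      refine this.congr fun j => ?_
      ring
    refine tendsto_nhds_unique hm.hasProd.tendsto_prod_nat ((hcv.mul hL).congr fun N => ?_)
    rw [← Finset.prod_mul_distrib]
  rw [br, hTh, Eo, jacobiTheta₂_functional_equation (τ / 2 + 1 / 2 - u / r) τ]
  have ea : (τ / 2 + 1 / 2 - u / r) / τ = -(u / (r * τ)) + 1 / 2 - (-1 / τ) / 2 := by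
    field_simp; ring
  have eb : xp τ r (u ^ 2 / r - u) = cexp (Real.pi * I * (τ + 1) ^ 2 / (4 * τ)) *
      cexp (-(Real.pi * I * (u / r))) * cexp (-Real.pi * I * (τ / 2 + 1 / 2 - u / r) ^ 2 / τ) := by
    unfold xp
    rw [← Complex.exp_add, ← Complex.exp_add]; congr 1
    field_simp; ring
  rw [ea, eb]
  field_simp

lemma jt_half (n : ℤ) (x σ : ℂ) :
    jacobiTheta₂_term n (x + 1 / 2) σ = (-1 : ℂ) ^ n * jacobiTheta₂_term n x σ := by
  unfold jacobiTheta₂_term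
  rw [← Complex.exp_pi_mul_I, ← Complex.exp_int_mul, ← Complex.exp_add]
  congr 1; ring

lemma D_eq (τ : ℂ) (hτ : 0 < τ.im) (x y : ℂ) :
    jacobiTheta₂ (x + 1 / 2) (τ / 2) * jacobiTheta₂ y (τ / 2) -
      jacobiTheta₂ x (τ / 2) * jacobiTheta₂ (y + 1 / 2) (τ / 2) =
    -2 * cexp (Real.pi * I * τ / 2) * (Eo τ (x + y) * Eo τ (x - y)) := by
  have hσ : 0 < (τ / 2).im := by
    have : (τ / 2).im = τ.im / 2 := by simp
    rw [this]; linarith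
  have hs : ∀ v, Summable fun n => ‖jacobiTheta₂_term n v (τ / 2)‖ :=
    fun v => ((summable_jacobiTheta₂_term_iff v _).2 hσ).norm
  have hs' : ∀ v, Summable fun n => ‖jacobiTheta₂_term n v τ‖ :=
    fun v => ((summable_jacobiTheta₂_term_iff v _).2 hτ).norm
  set F : ℤ × ℤ → ℂ := fun p => jacobiTheta₂_term p.1 x (τ / 2) * jacobiTheta₂_term p.2 y (τ / 2) *
    ((-1) ^ p.1 - (-1) ^ p.2) with hF
  have hL : jacobiTheta₂ (x + 1 / 2) (τ / 2) * jacobiTheta₂ y (τ / 2) -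
      jacobiTheta₂ x (τ / 2) * jacobiTheta₂ (y + 1 / 2) (τ / 2) = ∑' p, F p := by
    have sA : Summable fun p : ℤ × ℤ => jacobiTheta₂_term p.1 (x + 1 / 2) (τ / 2) *
        jacobiTheta₂_term p.2 y (τ / 2) := summable_mul_of_summable_norm
          (f := fun n => jacobiTheta₂_term n (x + 1 / 2) (τ / 2))
          (g := fun n => jacobiTheta₂_term n y (τ / 2)) (hs _) (hs _)
    have sB : Summable fun p : ℤ × ℤ => jacobiTheta₂_term p.1 x (τ / 2) *
        jacobiTheta₂_term p.2 (y + 1 / 2) (τ / 2) := summable_mul_of_summable_norm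
          (f := fun n => jacobiTheta₂_term n x (τ / 2))
          (g := fun n => jacobiTheta₂_term n (y + 1 / 2) (τ / 2)) (hs _) (hs _)
    unfold jacobiTheta₂
    rw [tsum_mul_tsum_of_summable_norm (hs _) (hs _), tsum_mul_tsum_of_summable_norm (hs _) (hs _),
      ← sA.tsum_sub sB]
    refine tsum_congr fun p => ?_
    rw [jt_half, jt_half, hF]; ring
  let φ : ℤ × ℤ → ℤ × ℤ := fun p => (-(p.1 + p.2 + 1), p.2 - p.1)
  have hφ : Function.Injective φ := by
    rintro ⟨a, b⟩ ⟨c, d⟩ h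
    simp only [φ, Prod.mk.injEq] at h ⊢
    omega
  have hsupp : Function.support F ⊆ Set.range φ := by
    rintro ⟨m, n⟩ h
    rcases Int.even_or_odd (m + n) with he | ho
    · exfalso
      apply h
      have : (-1 : ℂ) ^ m = (-1) ^ n := by
        rcases Int.even_or_odd n with hn | hn
        · have hm : Even m := by rw [Int.even_add] at he; exact he.2 hn
          rw [hm.neg_one_zpow, hn.neg_one_zpow]
        · have hm : Odd m := by
            rw [← Int.not_even_iff_odd] at *; rw [Int.even_add] at he; exact fun h => hn (he.1 h)
          rw [hm.neg_one_zpow, hn.neg_one_zpow]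
      simp [hF, this]
    · obtain ⟨t, ht⟩ := ho
      refine ⟨(-t - 1, n - t - 1), ?_⟩
      simp only [φ, Prod.mk.injEq]; omega
  rw [hL, ← hφ.tsum_eq hsupp]
  unfold Eo jacobiTheta₂
  rw [mul_mul_mul_comm (cexp (-(Real.pi * I * (x + y)))), tsum_mul_tsum_of_summable_norm (hs' _) (hs' _), ← mul_assoc, ← tsum_mul_left]
  refine tsum_congr fun p => ?_
  obtain ⟨i, j⟩ := p
  have e1 : ((-1 : ℂ) ^ (-(i + j + 1)) - (-1) ^ (j - i)) = -2 * (-1) ^ (i + j) := by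
    have a1 : (-1 : ℂ) ^ (-(i + j + 1)) = - (-1) ^ (i + j) := by
      rw [zpow_neg, zpow_add_one₀ (by norm_num)]
      rcases Int.even_or_odd (i + j) with h | h <;> rw [h.neg_one_zpow] <;> norm_num
    have a2 : (-1 : ℂ) ^ (j - i) = (-1) ^ (i + j) := by
      rw [show j - i = (i + j) + (-i + -i) by ring, zpow_add₀ (by norm_num),
        (Even.neg_one_zpow ⟨-i, rfl⟩ : (-1 : ℂ) ^ (-i + -i) = 1), mul_one]
    rw [a1, a2]; ring
  simp only [hF, φ]
  rw [e1, ← Complex.exp_pi_mul_I, ← Complex.exp_int_mul]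
  unfold jacobiTheta₂_term
  have : ∀ A B C A' B' C' D' E' : ℂ, A + B + C = A' + B' + C' + D' + E' →
      cexp A * cexp B * (-2 * cexp C) = -2 * cexp A' * (cexp B' * cexp C') * (cexp D' * cexp E') := by
    intro A B C A' B' C' D' E' h
    have h2 : cexp A * cexp B * cexp C = cexp A' * cexp B' * cexp C' * cexp D' * cexp E' := by
      simp only [← Complex.exp_add, h]
    linear_combination -2 * h2
  apply this
  push_cast
  ring

lemma psi_D (τ : ℂ) (r : ℝ) (hτ : 0 < τ.im) (hr : 0 < r) (hb : ∃ s, br τ r s ≠ 0) :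
    ∃ K : ℂ, ∀ s v : ℂ,
      th0 ((s + v) / (2 * r)) (τ / 2) * th3 ((s - v) / (2 * r)) (τ / 2) -
      th3 ((s + v) / (2 * r)) (τ / 2) * th0 ((s - v) / (2 * r)) (τ / 2) = K * (br τ r s * br τ r v) := by
  have hσ : 0 < (τ / 2).im := by
    have : (τ / 2).im = τ.im / 2 := by simp
    rw [this]; linarith
  have hr0 : (r : ℂ) ≠ 0 := by exact_mod_cast hr.ne'
  obtain ⟨K, hK⟩ := br_eq τ r hτ hr
  have hK0 : K ≠ 0 := by
    rintro rfl
    obtain ⟨s, hs⟩ := hb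
    exact hs (by rw [hK, zero_mul])
  obtain ⟨K0, K3, h03⟩ := th03_eq (τ / 2) hσ
  refine ⟨K0 * K3 * (-2 * cexp (Real.pi * I * τ / 2)) / (K * K), fun s v => ?_⟩
  have hD := D_eq τ hτ ((s + v) / (2 * r)) ((s - v) / (2 * r))
  rw [(h03 _).1, (h03 _).1, (h03 _).2, (h03 _).2, hK, hK]
  rw [show (s + v) / (2 * r) + (s - v) / (2 * r) = s / r by field_simp; ring,
    show (s + v) / (2 * r) - (s - v) / (2 * r) = v / r by field_simp; ring] at hD
  generalize Eo τ (s / r) = A at *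
  generalize Eo τ (v / r) = B at *
  have : K0 * K3 * (-2 * cexp (Real.pi * I * τ / 2)) / (K * K) * (K * A * (K * B)) =
      K0 * K3 * (-2 * cexp (Real.pi * I * τ / 2) * (A * B)) := by
    field_simp
  rw [this, ← hD]; ring

lemma star_up (τ : ℂ) (r : ℝ) (v : ℂ) (e e' : Bool) (c : ℤ) :
    psiStar τ r (v + 1) (sg e) (c + 1) c * psiStar τ r v (sg e') (c + 1 + 1) (c + 1) =
    psiStar τ r (v + 1) (sg e') (c + 1) c * psiStar τ r v (sg e) (c + 1 + 1) (c + 1) := by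
  have h : ∀ x, psi τ r (v + 1 - 1) x (c + 1) c = psi τ r (v - 1) x (c + 1 + 1) (c + 1) := by
    intro x; unfold psi; push_cast
    rw [show ((c : ℂ) + 1 - c) * (v + 1 - 1) + (c + 1) =
      (c + 1 + 1 - (c + 1)) * (v - 1) + (c + 1 + 1) by ring]
  unfold psiStar
  rw [h, h]; push_cast; ring

lemma star_down (τ : ℂ) (r : ℝ) (v : ℂ) (e e' : Bool) (c : ℤ) :
    psiStar τ r (v + 1) (sg e) (c - 1) c * psiStar τ r v (sg e') (c - 1 - 1) (c - 1) =
    psiStar τ r (v + 1) (sg e') (c - 1) c * psiStar τ r v (sg e) (c - 1 - 1) (c - 1) := by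
  have h : ∀ x, psi τ r (v + 1 - 1) x (c - 1) c = psi τ r (v - 1) x (c - 1 - 1) (c - 1) := by
    intro x; unfold psi; push_cast
    rw [show ((c : ℂ) - 1 - c) * (v + 1 - 1) + (c - 1) =
      (c - 1 - 1 - (c - 1)) * (v - 1) + (c - 1 - 1) by ring]
  unfold psiStar
  rw [h, h]; push_cast; ring

lemma star_mid (τ : ℂ) (r : ℝ) (hτ : 0 < τ.im) (hr : 0 < r) (v : ℂ) (e e' : Bool) (c : ℤ)
    (h1 : br τ r ((c + 1 : ℤ) : ℂ) ≠ 0) (h2 : br τ r ((c - 1 : ℤ) : ℂ) ≠ 0) :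
    psiStar τ r (v + 1) (sg e) (c + 1) c * psiStar τ r v (sg e') (c + 1 - 1) (c + 1) +
      psiStar τ r (v + 1) (sg e) (c - 1) c * psiStar τ r v (sg e') (c - 1 + 1) (c - 1) =
    psiStar τ r (v + 1) (sg e') (c + 1) c * psiStar τ r v (sg e) (c + 1 - 1) (c + 1) +
      psiStar τ r (v + 1) (sg e') (c - 1) c * psiStar τ r v (sg e) (c - 1 + 1) (c - 1) := by
  obtain ⟨K, hK⟩ := psi_D τ r hτ hr ⟨_, h1⟩
  have k1 := hK ((c + 1 : ℤ) : ℂ) v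
  have k2 := hK ((c - 1 : ℤ) : ℂ) v
  have main : psiStar τ r (v + 1) (sg true) (c + 1) c * psiStar τ r v (sg false) (c + 1 - 1) (c + 1) +
      psiStar τ r (v + 1) (sg true) (c - 1) c * psiStar τ r v (sg false) (c - 1 + 1) (c - 1) =
    psiStar τ r (v + 1) (sg false) (c + 1) c * psiStar τ r v (sg true) (c + 1 - 1) (c + 1) +
      psiStar τ r (v + 1) (sg false) (c - 1) c * psiStar τ r v (sg true) (c - 1 + 1) (c - 1) := by
    rw [show c + 1 - 1 = c by ring, show c - 1 + 1 = c by ring]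
    unfold psiStar psi sg
    simp only [if_true, Bool.false_eq_true, if_false, neg_neg, show ¬ ((-1 : ℤ) = 1) by decide]
    push_cast at *
    rw [show ((c : ℂ) + 1 - c) * (v + 1 - 1) + (c + 1) = c + 1 + v by ring,
      show ((c : ℂ) - (c + 1)) * (v - 1) + c = c + 1 - v by ring,
      show ((c : ℂ) - 1 - c) * (v + 1 - 1) + (c - 1) = c - 1 - v by ring,
      show ((c : ℂ) - (c - 1)) * (v - 1) + c = c - 1 + v by ring]
    generalize th0 ((c + 1 + v) / (2 * r)) (τ / 2) = a1 at *
    generalize th0 ((c + 1 - v) / (2 * r)) (τ / 2) = a2 at *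
    generalize th0 ((c - 1 + v) / (2 * r)) (τ / 2) = a3 at *
    generalize th0 ((c - 1 - v) / (2 * r)) (τ / 2) = a4 at *
    generalize th3 ((c + 1 + v) / (2 * r)) (τ / 2) = b1 at *
    generalize th3 ((c + 1 - v) / (2 * r)) (τ / 2) = b2 at *
    generalize th3 ((c - 1 + v) / (2 * r)) (τ / 2) = b3 at *
    generalize th3 ((c - 1 - v) / (2 * r)) (τ / 2) = b4 at *
    generalize br τ r ((c : ℂ) + 1) = B1 at *
    generalize br τ r ((c : ℂ) - 1) = B2 at *
    have q1 : (a1 * b2 - b1 * a2) * B1⁻¹ = K * br τ r v := by rw [k1]; field_simp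
    have q2 : (a3 * b4 - b3 * a4) * B2⁻¹ = K * br τ r v := by rw [k2]; field_simp
    have q3 := q1.trans q2.symm
    simp only [div_eq_mul_inv, mul_inv]
    linear_combination (-(Cc τ r ^ 4 * 2⁻¹ * 2⁻¹ * (br τ r c)⁻¹ * (br τ r (v + 1))⁻¹ *
      (br τ r v)⁻¹)) * q3
  cases e <;> cases e'
  · rfl
  · exact main.symm
  · exact main
  · rfl

/-- Fusion (combinatorial) formula for the L-matrix. -/
theorem L_fusion (τ : ℂ) (r : ℝ) (hτ : 0 < τ.im) (hr : 0 < r) (hirr : Irrational r)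
    (k n m : ℕ) (hk : 1 ≤ k) (hn : n ≤ k) (hm : m ≤ k)
    (a b c d : ℤ) (hab : a - b = (k : ℤ) - 2 * n) (hcd : c - d = (k : ℤ) - 2 * m)
    (hmin : (k : ℤ) < min c d) (u : ℂ)
    (hc : ∀ s : ℤ, |s - c| ≤ (k : ℤ) → br τ r (s : ℂ) ≠ 0)
    (hu : ∀ j : ℕ, j < k → br τ r (u + (j : ℂ)) ≠ 0) :
    Lk τ r k u a b c d =
      ∑ δ ∈ Finset.univ.filter fun δ : Fin k → Bool => (∑ j, sg (δ j)) = d - c,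
        ∏ j : Fin k,
          ∑ ε ∈ ({1, -1} : Finset ℤ),
            psiStar τ r (u + (k : ℂ) - (((j : ℕ) + 1 : ℕ) : ℂ)) ε
                (spath k c δ ((j : ℕ) + 1)) (spath k c δ (j : ℕ)) *
              psi τ r (u + (k : ℂ) - (((j : ℕ) + 1 : ℕ) : ℂ)) ε
                (cpathZ a (((k : ℤ) - (a - b)) / 2) (j : ℕ))
                (cpathZ a (((k : ℤ) - (a - b)) / 2) ((j : ℕ) + 1)) := by
  have hcadm : adm k c d := by unfold adm; constructor <;> omega
  have haadm : adm k a b := by unfold adm; constructor <;> omega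
  set S : (Fin k → Bool) → ℂ := fun ε =>
    ∑ δ ∈ Finset.univ.filter (fun δ : Fin k → Bool => (∑ j, sg (δ j)) = d - c),
      ∏ j : Fin k, psiStar τ r (u + (k : ℂ) - (((j : ℕ) + 1 : ℕ) : ℂ)) (sg (ε j))
        (spath k c δ ((j : ℕ) + 1)) (spath k c δ (j : ℕ)) with hS
  set Q : (Fin k → Bool) → ℂ := fun ε =>
      ∏ j : Fin k,
        psi τ r (u + (k : ℂ) - (((j : ℕ) + 1 : ℕ) : ℂ)) (sg (ε j))
          (cpathZ a (((k : ℤ) - (a - b)) / 2) (j : ℕ))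
          (cpathZ a (((k : ℤ) - (a - b)) / 2) ((j : ℕ) + 1)) with hQ
  have hsymm : ∀ ε ε' : Fin k → Bool, ∑ j, sg (ε j) = ∑ j, sg (ε' j) → S ε = S ε' := by
    intro ε ε' h
    simp only [hS]
    rw [sum_eq_TL (fun e v x y => psiStar τ r v (sg e) x y) u d k c ε,
      sum_eq_TL (fun e v x y => psiStar τ r v (sg e) x y) u d k c ε']
    refine TL_perm _ u d (fun s => br τ r (s : ℂ) ≠ 0) ?_ ?_ ?_ (perm_of_sum k ε ε' h) c ?_
    · intro e e' v c; exact star_up τ r v e e' c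
    · intro e e' v c; exact star_down τ r v e e' c
    · intro e e' v c h1 h2; exact star_mid τ r hτ hr v e e' c h1 h2
    · intro s hs; rw [List.length_ofFn] at hs; exact hc s hs
  have hstar : ∀ i ∈ Finset.range (k + 1), ∀ ε : Fin k → Bool, ∑ j, sg (ε j) = (k : ℤ) - 2 * i →
      psiStarF τ r k ((k : ℤ) - 2 * (i : ℤ)) u d c = S ε := by
    intro i hi ε hε
    have hi' : i ≤ k := by simpa [Nat.lt_succ_iff] using hi
    have ht : ((k : ℤ) + ((k : ℤ) - 2 * (i : ℤ))) / 2 = ((k - i : ℕ) : ℤ) := by omega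
    rw [hsymm ε (fun j : Fin k => decide (((j : ℕ) + 1 : ℤ) ≤ ((k - i : ℕ) : ℤ)))]
    · rw [psiStarF, if_pos hcadm, ht]
      simp only [hS, sg, decide_eq_true_eq]
    · rw [hε, Fin.sum_univ_eq_sum_range
        (fun j => sg (decide (((j : ℕ) + 1 : ℤ) ≤ ((k - i : ℕ) : ℤ)))) k, sum_eps0]
      omega
  have hR : ∀ δ : Fin k → Bool, (∏ j : Fin k,
          ∑ ε ∈ ({1, -1} : Finset ℤ),
            psiStar τ r (u + (k : ℂ) - (((j : ℕ) + 1 : ℕ) : ℂ)) ε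
                (spath k c δ ((j : ℕ) + 1)) (spath k c δ (j : ℕ)) *
              psi τ r (u + (k : ℂ) - (((j : ℕ) + 1 : ℕ) : ℂ)) ε
                (cpathZ a (((k : ℤ) - (a - b)) / 2) (j : ℕ))
                (cpathZ a (((k : ℤ) - (a - b)) / 2) ((j : ℕ) + 1))) =
      ∑ ε : Fin k → Bool, (∏ j : Fin k,
        psiStar τ r (u + (k : ℂ) - (((j : ℕ) + 1 : ℕ) : ℂ)) (sg (ε j))
        (spath k c δ ((j : ℕ) + 1)) (spath k c δ (j : ℕ))) * Q ε := by
    intro δ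
    simp only [hQ, ← Finset.prod_mul_distrib]
    rw [← Fintype.prod_sum (fun (j : Fin k) (e : Bool) =>
      psiStar τ r (u + (k : ℂ) - (((j : ℕ) + 1 : ℕ) : ℂ)) (sg e)
        (spath k c δ ((j : ℕ) + 1)) (spath k c δ (j : ℕ)) *
        psi τ r (u + (k : ℂ) - (((j : ℕ) + 1 : ℕ) : ℂ)) (sg e)
          (cpathZ a (((k : ℤ) - (a - b)) / 2) (j : ℕ))
          (cpathZ a (((k : ℤ) - (a - b)) / 2) ((j : ℕ) + 1)))]
    refine Finset.prod_congr rfl fun j _ => ?_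
    rw [Fintype.sum_bool, Finset.sum_pair (by decide)]
    rfl
  rw [Finset.sum_congr rfl fun δ _ => hR δ, Finset.sum_comm]
  have hR2 : ∀ ε : Fin k → Bool, (∑ δ ∈ Finset.univ.filter
      (fun δ : Fin k → Bool => (∑ j, sg (δ j)) = d - c), (∏ j : Fin k,
        psiStar τ r (u + (k : ℂ) - (((j : ℕ) + 1 : ℕ) : ℂ)) (sg (ε j))
        (spath k c δ ((j : ℕ) + 1)) (spath k c δ (j : ℕ))) * Q ε) = S ε * Q ε := by
    intro ε
    rw [← Finset.sum_mul]
  rw [Finset.sum_congr rfl fun ε _ => hR2 ε]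
  rw [← Finset.sum_fiberwise_of_maps_to (s := Finset.univ) (t := Finset.range (k + 1))
    (g := fun ε : Fin k → Bool => k - (List.ofFn ε).count true)
    (fun ε _ => by rw [Finset.mem_range]; omega)]
  unfold Lk
  refine Finset.sum_congr rfl fun i hi => ?_
  have hi' : i ≤ k := by simpa [Nat.lt_succ_iff] using hi
  rw [psiF, if_pos haadm, Finset.mul_sum]
  have hfil : (Finset.univ.filter fun ε : Fin k → Bool => (∑ j, sg (ε j)) = (k : ℤ) - 2 * i) =
      Finset.univ.filter fun ε : Fin k → Bool => k - (List.ofFn ε).count true = i := by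
    ext ε
    simp only [Finset.mem_filter, Finset.mem_univ, true_and]
    rw [sum_sg_ofFn]
    have := List.count_le_length (a := true) (l := List.ofFn ε)
    rw [List.length_ofFn] at this
    omega
  rw [← hfil]
  refine Finset.sum_congr rfl fun ε hε => ?_
  rw [hstar i hi ε (by simpa using hε)]

end Ell
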